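/- Fix an integer r ≥ 1. Then R̃_4(rK_2; 5r − 3) ≤ 7r − 5. Equivalently: Builder has a strategy that, playing on K_{5r−3} with 4 colors, guarantees within 7r − 5 moves that some color class contains r pairwise disjoint edges, against every Painter strategy. -/

import Mathlib

open Finset

/-- Two edges of a complete graph (elements of `Sym2 (Fin n)`) are disjoint if they
share no vertex. -/
def EdgeDisjoint {n : ℕ} (e f : Sym2 (Fin n)) : Prop := ∀ v, v ∈ e → v ∉ f

/-- A finite set of elements of `Sym2 (Fin n)` is a matching if each element is a genuine
(non-loop) edge and the edges are pairwise disjoint. -/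
def IsMatchingIn {n : ℕ} (M : Finset (Sym2 (Fin n))) : Prop :=
  (∀ e ∈ M, ¬ e.IsDiag) ∧ (M : Set (Sym2 (Fin n))).Pairwise EdgeDisjoint

/-- A history of the online Ramsey game on `K_n` with `t` colours: the list of
edges played so far, each together with the colour Painter gave it. -/
abbrev GameHistory (n t : ℕ) := List (Sym2 (Fin n) × Fin t)

/-- A Builder strategy: given the history so far, select the next edge. -/
abbrev BuilderStrategy (n t : ℕ) := GameHistory n t → Sym2 (Fin n)

/-- A Painter strategy: given the history so far and the newly selected edge,
choose a colour for it. -/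
abbrev PainterStrategy (n t : ℕ) := GameHistory n t → Sym2 (Fin n) → Fin t

/-- The history after `k` moves when Builder plays strategy `B` against Painter
strategy `P`. -/
def gamePlay {n t : ℕ} (B : BuilderStrategy n t) (P : PainterStrategy n t) :
    ℕ → GameHistory n t
  | 0 => []
  | k + 1 =>
      let h := gamePlay B P k
      h ++ [(B h, P h (B h))]

/-- Builder plays legally for the first `k` moves against `P`: every selected edge
is a genuine (non-loop) edge not selected before. -/
def BuilderValid {n t : ℕ} (B : BuilderStrategy n t) (P : PainterStrategy n t)
    (k : ℕ) : Prop :=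
  ∀ j < k, ¬ (B (gamePlay B P j)).IsDiag ∧
    B (gamePlay B P j) ∉ (gamePlay B P j).map Prod.fst

/-- The history `h` contains, for some colour `i`, a matching of `r i` edges all
coloured `i`. -/
def HistoryHasMatching (n t : ℕ) (r : Fin t → ℕ) (h : GameHistory n t) : Prop :=
  ∃ i : Fin t, ∃ M : Finset (Sym2 (Fin n)),
    M.card = r i ∧ IsMatchingIn M ∧ ∀ e ∈ M, (e, i) ∈ h

/-- Builder can force, within `k` legal moves on `K_n` with `t` colours, some colour
`i` to contain a matching of `r i` edges, against every Painter strategy. -/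
def BuilderWinsIn (n t : ℕ) (r : Fin t → ℕ) (k : ℕ) : Prop :=
  ∃ B : BuilderStrategy n t, (∀ P : PainterStrategy n t, BuilderValid B P k) ∧
    ∀ P : PainterStrategy n t, HistoryHasMatching n t r (gamePlay B P k)

/-- The restricted online Ramsey number `R̃(r₁K₂,…,r_tK₂; n)`: the least `k` such
that Builder can force a win within `k` moves. -/
noncomputable def restrictedOnlineRamsey (n t : ℕ) (r : Fin t → ℕ) : ℕ :=
  sInf {k | BuilderWinsIn n t r k}

/-- A colouring `c` of (the edges of) `K_N` with `t` colours contains, for some colour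
`i`, a matching of `r i` edges all coloured `i`. -/
def ColoringHasMatching (N t : ℕ) (r : Fin t → ℕ) (c : Sym2 (Fin N) → Fin t) : Prop :=
  ∃ i : Fin t, ∃ M : Finset (Sym2 (Fin N)),
    M.card = r i ∧ IsMatchingIn M ∧ ∀ e ∈ M, c e = i

/-- The classical Ramsey number `R(r₁K₂,…,r_tK₂)`: the least `N` such that every
`t`-colouring of the edges of `K_N` contains, for some `i`, a matching of `r i`
edges in colour `i`. -/
noncomputable def matchingRamsey (t : ℕ) (r : Fin t → ℕ) : ℕ :=
  sInf {N | ∀ c : Sym2 (Fin N) → Fin t, ColoringHasMatching N t r c}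

/-!
Builder maintains vertex-disjoint pieces of three kinds: single edges, cherries with two differently
coloured edges, and sets of five vertices in which all four colours appear. A piece with `k` colours
has `k + 1` vertices and costs at most `2k - 1` moves. Put `s = r - 1`. As soon as one colour occurs
in `s + 1` pieces Builder has won; before that, giving one colour the weight `1` and the others the
weight `2` shows that the pieces cost at most `7s` moves in total. So it suffices that every move
raises the total allowed cost by at least `1`.

Builder keeps a base colour common to all cherries. Joining two differently coloured edges makes a
cherry, and joining the centres of two cherries with complementary colours makes a five-vertex
piece; both raise the allowed cost by `1`. If no such step, or pair of steps, leads back to a base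
colour, then the edges and cherries use so few colour combinations that suitable weights on the
colours with sum `5` dominate the number of vertices of each piece. Hence at most `5s` vertices are
used, and Builder plays an edge between two of the remaining vertices.
-/

theorem HistoryHasMatching.mono {n t : ℕ} {r : Fin t → ℕ} {h h' : GameHistory n t}
    (hm : HistoryHasMatching n t r h) (hh : h ⊆ h') : HistoryHasMatching n t r h' := by
  obtain ⟨i, M, hcard, hM, hMh⟩ := hm
  exact ⟨i, M, hcard, hM, fun e he => hh (hMh e he)⟩

namespace OnlineRamsey

variable {n t : ℕ}

section Game

variable {r : Fin t → ℕ} {K : ℕ} {h : GameHistory n t}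

/-- Builder has a strategy reaching the target matching from the history `h` before the total
length of the history exceeds `K`. -/
inductive CanWin (r : Fin t → ℕ) (K : ℕ) : GameHistory n t → Prop
  | of_matching {h : GameHistory n t} (hm : HistoryHasMatching n t r h) : CanWin r K h
  | of_move {h : GameHistory n t} (e : Sym2 (Fin n)) (hK : h.length < K) (he : ¬ e.IsDiag)
      (hnew : e ∉ h.map Prod.fst) (hwin : ∀ c, CanWin r K (h ++ [(e, c)])) : CanWin r K h

theorem exists_unplayed_edge (hlen : h.length < n.choose 2) :
    ∃ e : Sym2 (Fin n), ¬ e.IsDiag ∧ e ∉ h.map Prod.fst := by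
  by_contra! hall
  have hsub : ({e | ¬ e.IsDiag} : Finset (Sym2 (Fin n))) ⊆ (h.map Prod.fst).toFinset :=
    fun e he => List.mem_toFinset.2 (hall e (mem_filter_univ e |>.1 he))
  have hedges : #({e | ¬ e.IsDiag} : Finset (Sym2 (Fin n))) = n.choose 2 := by
    rw [← Fintype.card_subtype, Sym2.card_subtype_not_diag, Fintype.card_fin]
  have hplayed := List.toFinset_card_le (h.map Prod.fst)
  rw [List.length_map] at hplayed
  exact absurd (card_le_card hsub) (by omega)

-- Once the matching is present Builder still owes legal moves; any unplayed edge will do.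
theorem CanWin.exists_move (hwin : CanWin r K h) (hlen : h.length < K) (hK : K ≤ n.choose 2) :
    ∃ e : Sym2 (Fin n), ¬ e.IsDiag ∧ e ∉ h.map Prod.fst ∧ ∀ c, CanWin r K (h ++ [(e, c)]) := by
  cases hwin with
  | of_matching hm =>
    obtain ⟨e, he, hnew⟩ := exists_unplayed_edge (hlen.trans_le hK)
    exact ⟨e, he, hnew, fun c => .of_matching (hm.mono (List.subset_append_left _ _))⟩
  | of_move e _ he hnew hwin => exact ⟨e, he, hnew, hwin⟩

theorem CanWin.historyHasMatching (hwin : CanWin r K h) (hlen : K ≤ h.length) :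
    HistoryHasMatching n t r h := by
  cases hwin with
  | of_matching hm => exact hm
  | of_move _ hK => omega

theorem length_gamePlay (B : BuilderStrategy n t) (P : PainterStrategy n t) (k : ℕ) :
    (gamePlay B P k).length = k := by
  induction k with
  | zero => rfl
  | succ k ih => simp [gamePlay, ih]

theorem CanWin.builderWinsIn [NeZero n] (hwin : CanWin (n := n) r K []) (hK : K ≤ n.choose 2) :
    BuilderWinsIn n t r K := by
  have hmove (h : GameHistory n t) : ∃ e : Sym2 (Fin n), CanWin r K h → h.length < K →
      ¬ e.IsDiag ∧ e ∉ h.map Prod.fst ∧ ∀ c, CanWin r K (h ++ [(e, c)]) := by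
    by_cases hh : CanWin r K h ∧ h.length < K
    · obtain ⟨e, he⟩ := hh.1.exists_move hh.2 hK
      exact ⟨e, fun _ _ => he⟩
    · exact ⟨s(0, 0), fun h₁ h₂ => absurd ⟨h₁, h₂⟩ hh⟩
  choose B hB using hmove
  have hplay (P : PainterStrategy n t) : ∀ k ≤ K, CanWin r K (gamePlay B P k) := by
    intro k
    induction k with
    | zero => exact fun _ => hwin
    | succ k ih =>
      intro hk
      exact (hB _ (ih (by omega)) (by rw [length_gamePlay]; omega)).2.2 _
  refine ⟨B, fun P k hk => ?_, fun P => (hplay P K le_rfl).historyHasMatching ?_⟩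
  · obtain ⟨he, hnew, -⟩ := hB _ (hplay P k hk.le) (by rwa [length_gamePlay])
    exact ⟨he, hnew⟩
  · rw [length_gamePlay]

-- An edge that was already played is not replayed: its colour is read off the history.
theorem CanWin.of_query {u v : Fin n} (huv : u ≠ v) (hK : h.length < K)
    (hwin : ∀ c h', h ⊆ h' → (s(u, v), c) ∈ h' → h'.length ≤ h.length + 1 → CanWin r K h') :
    CanWin r K h := by
  by_cases hplayed : s(u, v) ∈ h.map Prod.fst
  · obtain ⟨⟨_, c⟩, hc, rfl⟩ := List.mem_map.1 hplayed
    exact hwin c h (List.Subset.refl h) hc (Nat.le_succ _)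
  · exact .of_move s(u, v) hK huv hplayed fun c =>
      hwin c _ (List.subset_append_left _ _) (by simp) (by simp)

end Game

section Colours

/-- Some edge inside the vertex set `S` has received colour `c`. -/
def HasColourIn (h : GameHistory n t) (S : Finset (Fin n)) (c : Fin t) : Prop :=
  ∃ e : Sym2 (Fin n), ¬ e.IsDiag ∧ (∀ v ∈ e, v ∈ S) ∧ (e, c) ∈ h

variable {h h' : GameHistory n t} {S T : Finset (Fin n)} {c : Fin t}

theorem HasColourIn.mono (hc : HasColourIn h S c) (hh : h ⊆ h') (hST : S ⊆ T) :
    HasColourIn h' T c := by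
  obtain ⟨e, he, heS, hec⟩ := hc
  exact ⟨e, he, fun v hv => hST (heS v hv), hh hec⟩

theorem hasColourIn_of_mem {u v : Fin n} (huv : u ≠ v) (hu : u ∈ S) (hv : v ∈ S)
    (hc : (s(u, v), c) ∈ h) : HasColourIn h S c := by
  refine ⟨s(u, v), huv, fun w hw => ?_, hc⟩
  rcases Sym2.mem_iff.1 hw with rfl | rfl <;> assumption

theorem exists_matching_of_pairwiseDisjoint {ι : Type*} {𝒮 : Finset ι} {f : ι → Finset (Fin n)}
    (hdisj : (𝒮 : Set ι).PairwiseDisjoint f) (hc : ∀ p ∈ 𝒮, HasColourIn h (f p) c) :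
    ∃ M : Finset (Sym2 (Fin n)), #M = #𝒮 ∧ IsMatchingIn M ∧ ∀ e ∈ M, (e, c) ∈ h := by
  choose e he hef hec using fun p : 𝒮 => hc p p.2
  have hedge (p q : 𝒮) (hpq : p ≠ q) : EdgeDisjoint (e p) (e q) := fun v hvp hvq =>
    disjoint_left.1 (hdisj p.2 q.2 (Subtype.coe_ne_coe.2 hpq)) (hef p v hvp) (hef q v hvq)
  have hinj : Function.Injective e := by
    intro p q hpq
    by_contra hne
    have hmem := (e p).out_fst_mem
    exact hedge p q hne _ hmem (hpq ▸ hmem)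
  refine ⟨univ.image e, ?_, ⟨?_, ?_⟩, ?_⟩
  · rw [card_image_of_injective _ hinj, card_univ, Fintype.card_coe]
  · simpa only [forall_mem_image, mem_univ, forall_const] using he
  · rw [coe_image]
    rintro _ ⟨p, -, rfl⟩ _ ⟨q, -, rfl⟩ hne
    exact hedge p q (ne_of_apply_ne e hne)
  · simpa only [forall_mem_image, mem_univ, forall_const] using hec

end Colours

section Stars

/-- The vertex set `S` carries a star with centre `v` having exactly one leaf for each colour in
`C`, joined to `v` by an edge of that colour. -/
inductive IsRainbowStar (h : GameHistory n t) (v : Fin n) :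
    Finset (Fin n) → Finset (Fin t) → Prop
  | centre : IsRainbowStar h v {v} ∅
  | extend {S : Finset (Fin n)} {C : Finset (Fin t)} {w : Fin n} {c : Fin t}
      (hS : IsRainbowStar h v S C) (hw : w ∉ S) (hc : c ∉ C) (hvw : (s(v, w), c) ∈ h) :
      IsRainbowStar h v (insert w S) (insert c C)

variable {h h' : GameHistory n t} {v w : Fin n} {S T : Finset (Fin n)} {C : Finset (Fin t)}
  {c : Fin t}

theorem isRainbowStar_edge (hvw : v ≠ w) (hc : (s(v, w), c) ∈ h) :
    IsRainbowStar h v {w, v} {c} :=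
  .extend .centre (by simpa using hvw.symm) (notMem_empty c) hc

namespace IsRainbowStar

theorem centre_mem (hS : IsRainbowStar h v S C) : v ∈ S := by
  induction hS with
  | centre => exact mem_singleton_self v
  | extend _ _ _ _ ih => exact mem_insert_of_mem ih

theorem card_verts (hS : IsRainbowStar h v S C) : #S = #C + 1 := by
  induction hS with
  | centre => rfl
  | extend _ hw hc _ ih => rw [card_insert_of_notMem hw, card_insert_of_notMem hc, ih]

theorem mono (hS : IsRainbowStar h v S C) (hh : h ⊆ h') : IsRainbowStar h' v S C := by
  induction hS with
  | centre => exact .centre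
  | extend _ hw hc hvw ih => exact .extend ih hw hc (hh hvw)

theorem hasColourIn (hS : IsRainbowStar h v S C) (hc : c ∈ C) : HasColourIn h S c := by
  induction hS with
  | centre => exact absurd hc (notMem_empty c)
  | @extend S C w d hS hw _ hvw ih =>
    rcases mem_insert.1 hc with rfl | hc
    · exact hasColourIn_of_mem (ne_of_mem_of_not_mem hS.centre_mem hw)
        (mem_insert_of_mem hS.centre_mem) (mem_insert_self w S) hvw
    · exact (ih hc).mono (List.Subset.refl h) (subset_insert w S)

theorem exists_erase (hS : IsRainbowStar h v S C) (hc : c ∈ C) :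
    ∃ S' ⊆ S, IsRainbowStar h v S' (C.erase c) := by
  induction hS with
  | centre => exact absurd hc (notMem_empty c)
  | @extend S C w d hS hw hd hvw ih =>
    by_cases hcd : c = d
    · subst hcd
      exact ⟨S, subset_insert w S, by rwa [erase_insert hd]⟩
    · obtain ⟨S', hS', hstar⟩ := ih (mem_of_mem_insert_of_ne hc hcd)
      refine ⟨insert w S', insert_subset_insert w hS', ?_⟩
      rw [erase_insert_of_ne (Ne.symm hcd)]
      exact hstar.extend (fun hwS => hw (hS' hwS)) (fun hdC => hd (mem_of_mem_erase hdC)) hvw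

-- The leaf whose colour the edge between the centres repeats is superfluous.
theorem exists_join (hS : IsRainbowStar h v S C) (hT : IsRainbowStar h w T Cᶜ)
    (hST : Disjoint S T) (hvw : (s(v, w), c) ∈ h) :
    ∃ R ⊆ S ∪ T, #R = t + 1 ∧ ∀ d, HasColourIn h R d := by
  wlog hc : c ∈ C generalizing v w S T C
  · rw [union_comm]
    exact this (C := Cᶜ) hT (by rwa [compl_compl]) hST.symm (by rwa [Sym2.eq_swap])
      (mem_compl.2 hc)
  obtain ⟨S', hS', hstar⟩ := hS.exists_erase hc
  refine ⟨S' ∪ T, union_subset_union_left hS', ?_, fun d => ?_⟩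
  · have hC := card_add_card_compl C
    have hpos := card_pos.2 ⟨c, hc⟩
    rw [Fintype.card_fin] at hC
    rw [card_union_of_disjoint (disjoint_of_subset_left hS' hST), hstar.card_verts, hT.card_verts,
      card_erase_of_mem hc]
    omega
  · by_cases hdC : d ∈ C
    · by_cases hdc : d = c
      · subst hdc
        exact hasColourIn_of_mem (disjoint_iff_ne.1 hST v hS.centre_mem w hT.centre_mem)
          (mem_union_left T hstar.centre_mem) (mem_union_right S' hT.centre_mem) hvw
      · exact (hstar.hasColourIn (mem_erase.2 ⟨hdc, hdC⟩)).mono (List.Subset.refl h)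
          subset_union_left
    · exact (hT.hasColourIn (mem_compl.2 hdC)).mono (List.Subset.refl h) subset_union_right

end IsRainbowStar

end Stars

/-- A group of vertices of Builder's structure, with the colours known to appear inside it. -/
structure Piece (n t : ℕ) where
  verts : Finset (Fin n)
  colours : Finset (Fin t)
  deriving DecidableEq

/-- The number of moves Builder may spend on a piece: `1`, `3`, `7` for a piece with `1`, `2`, `4`
colours. The subtraction is harmless because pieces carry at least one colour. -/
def Piece.weight (p : Piece n t) : ℕ := 2 * #p.colours - 1

/-- The pieces Builder uses: a single edge, a cherry with two differently coloured edges, or a set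
of `t + 1` vertices in which every colour appears. -/
structure Piece.IsValid (h : GameHistory n t) (p : Piece n t) : Prop where
  nonempty : p.colours.Nonempty
  card_verts : #p.verts = #p.colours + 1
  hasColourIn : ∀ c ∈ p.colours, HasColourIn h p.verts c
  star : p.colours ≠ univ → #p.colours ≤ 2 ∧ ∃ v, IsRainbowStar h v p.verts p.colours

namespace Piece

variable {h h' : GameHistory n t} {p q r : Piece n t} {S : Finset (Fin n)} {C : Finset (Fin t)}

theorem IsValid.mono (hp : p.IsValid h) (hh : h ⊆ h') : p.IsValid h' where
  nonempty := hp.nonempty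
  card_verts := hp.card_verts
  hasColourIn c hc := (hp.hasColourIn c hc).mono hh Subset.rfl
  star hne := ⟨(hp.star hne).1, (hp.star hne).2.imp fun _ hv => hv.mono hh⟩

theorem isValid_of_star {v : Fin n} (hS : IsRainbowStar h v S C) (hne : C.Nonempty)
    (hC : #C ≤ 2) : IsValid h ⟨S, C⟩ where
  nonempty := hne
  card_verts := hS.card_verts
  hasColourIn _ := hS.hasColourIn
  star _ := ⟨hC, v, hS⟩

theorem isValid_of_forall [NeZero t] (hS : #S = t + 1) (hc : ∀ c, HasColourIn h S c) :
    IsValid h ⟨S, univ⟩ where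
  nonempty := univ_nonempty
  card_verts := by rw [hS, card_univ, Fintype.card_fin]
  hasColourIn c _ := hc c
  star hne := absurd rfl hne

theorem IsValid.verts_nonempty (hp : p.IsValid h) : p.verts.Nonempty :=
  card_pos.1 (by rw [hp.card_verts]; omega)

theorem IsValid.card_pos (hp : p.IsValid h) : 0 < #p.colours := Finset.card_pos.2 hp.nonempty

theorem weight_eq_of_card_add (hp : p.IsValid h) (hq : q.IsValid h)
    (hr : #r.colours = #p.colours + #q.colours) : r.weight = p.weight + q.weight + 1 := by
  have := hp.card_pos
  have := hq.card_pos
  unfold weight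
  omega

end Piece

section Positions

/-- The number of moves Builder may have spent on the pieces in `𝒜`. -/
def potential (𝒜 : Finset (Piece n t)) : ℕ := ∑ p ∈ 𝒜, p.weight

/-- `𝒜` is a family of vertex-disjoint pieces built within the allotted number of moves. -/
structure IsPosition (h : GameHistory n t) (𝒜 : Finset (Piece n t)) : Prop where
  valid : ∀ p ∈ 𝒜, p.IsValid h
  disjoint : (𝒜 : Set (Piece n t)).PairwiseDisjoint Piece.verts
  length_le : h.length ≤ potential 𝒜

variable {h h' : GameHistory n t} {𝒜 ℬ : Finset (Piece n t)} {p q r : Piece n t} {s K : ℕ}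

theorem isPosition_nil : IsPosition ([] : GameHistory n t) ∅ :=
  ⟨by simp, by simp, Nat.zero_le _⟩

namespace IsPosition

theorem replace (hA : IsPosition h 𝒜) (hh : h ⊆ h') (hlen : h'.length ≤ potential 𝒜 + 1)
    (hB : ℬ ⊆ 𝒜) (hr : r.IsValid h') (hdisj : ∀ q ∈ ℬ, Disjoint r.verts q.verts)
    (hweight : potential ℬ + r.weight = potential 𝒜 + 1) :
    IsPosition h' (insert r ℬ) ∧ potential (insert r ℬ) = potential 𝒜 + 1 := by
  have hrB : r ∉ ℬ := fun hmem =>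
    hr.verts_nonempty.ne_empty (disjoint_self_iff_empty _ |>.1 (hdisj r hmem))
  have hpot : potential (insert r ℬ) = potential 𝒜 + 1 := by
    rw [potential, sum_insert hrB, add_comm]
    exact hweight
  refine ⟨⟨?_, ?_, hpot ▸ hlen⟩, hpot⟩
  · rw [forall_mem_insert]
    exact ⟨hr, fun q hq => (hA.valid q (hB hq)).mono hh⟩
  · rw [coe_insert]
    exact (hA.disjoint.subset (coe_subset.2 hB)).insert fun q hq _ => hdisj q hq

theorem merge (hA : IsPosition h 𝒜) (hh : h ⊆ h') (hlen : h'.length ≤ potential 𝒜 + 1)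
    (hp : p ∈ 𝒜) (hq : q ∈ 𝒜) (hpq : p ≠ q) (hr : r.IsValid h')
    (hverts : r.verts ⊆ p.verts ∪ q.verts) (hcard : #r.colours = #p.colours + #q.colours) :
    IsPosition h' (insert r (𝒜 \ {p, q})) ∧
      potential (insert r (𝒜 \ {p, q})) = potential 𝒜 + 1 := by
  refine hA.replace hh hlen sdiff_subset hr (fun x hx => ?_) ?_
  · simp only [mem_sdiff, mem_insert, mem_singleton, not_or] at hx
    obtain ⟨hxA, hxp, hxq⟩ := hx
    exact disjoint_of_subset_left hverts (disjoint_union_left.2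
      ⟨hA.disjoint hp hxA (Ne.symm hxp), hA.disjoint hq hxA (Ne.symm hxq)⟩)
  · have hsplit := sum_sdiff (f := Piece.weight)
      (insert_subset hp (singleton_subset_iff.2 hq) : {p, q} ⊆ 𝒜)
    rw [sum_pair hpq] at hsplit
    rw [Piece.weight_eq_of_card_add (hA.valid p hp) (hA.valid q hq) hcard, potential, potential,
      ← hsplit]
    omega

theorem canWin_of_card {m : Fin t → ℕ} {i : Fin t} (hA : IsPosition h 𝒜)
    (hi : m i ≤ #{p ∈ 𝒜 | i ∈ p.colours}) : CanWin m K h := by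
  obtain ⟨𝒮, hS, hcard⟩ := exists_subset_card_eq hi
  have hmem (p : Piece n t) (hp : p ∈ 𝒮) : p ∈ 𝒜 ∧ i ∈ p.colours := mem_filter.1 (hS hp)
  obtain ⟨M, hM, hmatch, hcol⟩ := exists_matching_of_pairwiseDisjoint (h := h) (c := i)
    (hA.disjoint.subset fun p hp => (hmem p hp).1)
    (fun p hp => (hA.valid p (hmem p hp).1).hasColourIn i (hmem p hp).2)
  exact .of_matching ⟨i, M, hM.trans hcard, hmatch, hcol⟩

end IsPosition

theorem sum_le_of_colour_weights {ι κ : Type*} [Fintype κ] [DecidableEq κ] {𝒮 : Finset ι}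
    {C : ι → Finset κ} {f : ι → ℕ} {w : κ → ℕ} (hf : ∀ p ∈ 𝒮, f p ≤ ∑ i ∈ C p, w i)
    (hs : ∀ i, #{p ∈ 𝒮 | i ∈ C p} ≤ s) : ∑ p ∈ 𝒮, f p ≤ s * ∑ i, w i :=
  calc ∑ p ∈ 𝒮, f p ≤ ∑ p ∈ 𝒮, ∑ i ∈ C p, w i := sum_le_sum hf
    _ = ∑ i, ∑ p ∈ 𝒮 with i ∈ C p, w i := sum_comm' (by simp)
    _ = ∑ i, #{p ∈ 𝒮 | i ∈ C p} * w i := by simp only [sum_const, smul_eq_mul]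
    _ ≤ ∑ i, s * w i := sum_le_sum fun i _ => Nat.mul_le_mul_right (w i) (hs i)
    _ = s * ∑ i, w i := (mul_sum ..).symm

theorem potential_le [NeZero t] (hs : ∀ i, #{p ∈ 𝒜 | i ∈ p.colours} ≤ s) :
    potential 𝒜 ≤ s * (2 * t - 1) := by
  have hsum (C : Finset (Fin t)) :
      ∑ i ∈ C, (if i = 0 then 1 else 2) + (if 0 ∈ C then 1 else 0) = 2 * #C :=
    calc ∑ i ∈ C, (if i = 0 then 1 else 2) + (if 0 ∈ C then 1 else 0)
        = ∑ i ∈ C, ((if i = 0 then 1 else 2) + if i = 0 then 1 else 0) := by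
          rw [sum_add_distrib, sum_ite_eq']
      _ = ∑ i ∈ C, 2 := sum_congr rfl fun i _ => by split_ifs <;> rfl
      _ = 2 * #C := by rw [sum_const, smul_eq_mul, mul_comm]
  have hweight (p : Piece n t) : p.weight ≤ ∑ i ∈ p.colours, if i = 0 then 1 else 2 := by
    have := hsum p.colours
    unfold Piece.weight
    split_ifs at this <;> omega
  have htotal : ∑ i : Fin t, (if i = 0 then 1 else 2) = 2 * t - 1 := by
    have := hsum univ
    rw [if_pos (mem_univ 0), card_univ, Fintype.card_fin] at this
    omega
  rw [← htotal]
  exact sum_le_of_colour_weights (fun p _ => hweight p) hs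

theorem IsPosition.canWin_of_query [NeZero t] (hA : IsPosition h 𝒜) (hK : s * (2 * t - 1) < K)
    {u v : Fin n} (huv : u ≠ v)
    (hwin : ∀ c h', h ⊆ h' → (s(u, v), c) ∈ h' → h'.length ≤ potential 𝒜 + 1 →
      CanWin (fun _ => s + 1) K h') : CanWin (fun _ => s + 1) K h := by
  by_cases hs : ∀ i, #{p ∈ 𝒜 | i ∈ p.colours} ≤ s
  · have hlen := hA.length_le
    exact .of_query huv (hlen.trans_lt ((potential_le hs).trans_lt hK))
      fun c h' hh hc hlen' => hwin c h' hh hc (by omega)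
  · push Not at hs
    obtain ⟨i, hi⟩ := hs
    exact hA.canWin_of_card hi

end Positions

section Strategy

/-- Every piece with more than one colour contains the colour `a`. -/
def IsBased (a : Fin t) (𝒜 : Finset (Piece n t)) : Prop :=
  ∀ p ∈ 𝒜, 1 < #p.colours → a ∈ p.colours

theorem IsBased.mono {a : Fin t} {𝒜 ℬ : Finset (Piece n t)} (ha : IsBased a 𝒜) (hB : ℬ ⊆ 𝒜) :
    IsBased a ℬ :=
  fun p hp => ha p (hB hp)

theorem IsBased.insert {a : Fin t} {𝒜 : Finset (Piece n t)} {r : Piece n t} (ha : IsBased a 𝒜)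
    (hr : 1 < #r.colours → a ∈ r.colours) : IsBased a (insert r 𝒜) := by
  intro p hp
  rcases mem_insert.1 hp with rfl | hp
  exacts [hr, ha p hp]

/-- With four colours, Builder wins from every based position of potential greater than `m`. -/
def WinsAbove (n s m : ℕ) : Prop :=
  ∀ (h : GameHistory n 4) (𝒜 : Finset (Piece n 4)) (a : Fin 4), IsPosition h 𝒜 → IsBased a 𝒜 →
    m < potential 𝒜 → CanWin (fun _ => s + 1) (7 * s + 1) h

variable {h : GameHistory n 4} {𝒜 : Finset (Piece n 4)} {p q : Piece n 4} {a b y z : Fin 4}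
  {s m : ℕ}

theorem WinsAbove.mono {m' : ℕ} (hI : WinsAbove n s m) (hm : m ≤ m') : WinsAbove n s m' :=
  fun h 𝒜 a hA ha hpot => hI h 𝒜 a hA ha (hm.trans_lt hpot)

theorem Piece.IsValid.exists_star (hp : p.IsValid h) (hcard : #p.colours ≤ 2) :
    ∃ v, IsRainbowStar h v p.verts p.colours := by
  refine (hp.star fun huniv => ?_).2
  simp [huniv] at hcard

theorem Piece.IsValid.card_eq_two_or_eq_univ (hp : p.IsValid h) (hcard : 1 < #p.colours) :
    #p.colours = 2 ∨ p.colours = univ :=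
  or_iff_not_imp_right.2 fun hne => le_antisymm (hp.star hne).1 hcard

theorem exists_eq_pair_of_card_eq_two {α : Type*} [DecidableEq α] {C : Finset α} {c : α}
    (hC : #C = 2) (hc : c ∈ C) : ∃ d, d ≠ c ∧ C = {d, c} := by
  obtain ⟨d, hd⟩ := card_eq_one.1 (show #(C.erase c) = 1 by rw [card_erase_of_mem hc, hC])
  exact ⟨d, ne_of_mem_erase (hd ▸ mem_singleton_self d), by
    rw [← insert_erase hc, hd, pair_comm]⟩

theorem canWin_of_complementary_cherries (hI : WinsAbove n s (potential 𝒜)) (hA : IsPosition h 𝒜)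
    (hp : p ∈ 𝒜) (hq : q ∈ 𝒜) (hcard : #p.colours = 2) (hpq : q.colours = p.coloursᶜ)
    (hb : IsBased b (𝒜 \ {p, q})) : CanWin (fun _ => s + 1) (7 * s + 1) h := by
  have hqcard : #q.colours = 2 := by rw [hpq, card_compl, hcard, Fintype.card_fin]
  have hne : p ≠ q := by
    rintro rfl
    exact ne_compl_self hpq
  obtain ⟨v, hv⟩ := (hA.valid p hp).exists_star hcard.le
  obtain ⟨w, hw⟩ := (hA.valid q hq).exists_star hqcard.le
  have hdisj := hA.disjoint hp hq hne
  refine hA.canWin_of_query (by omega) (disjoint_iff_ne.1 hdisj v hv.centre_mem w hw.centre_mem)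
    fun c h' hh hc hlen => ?_
  obtain ⟨R, hR, hRcard, hRc⟩ := (hv.mono hh).exists_join (hpq ▸ hw.mono hh) hdisj hc
  obtain ⟨hpos, hpot⟩ := hA.merge (r := ⟨R, univ⟩) hh hlen hp hq hne
    (Piece.isValid_of_forall hRcard hRc) hR (by simp [hcard, hqcard])
  exact hI _ _ b hpos (hb.insert fun _ => mem_univ b) (by omega)

theorem canWin_of_merge_edges (hA : IsPosition h 𝒜) (hp : p ∈ 𝒜) (hq : q ∈ 𝒜)
    (hpy : p.colours = {y}) (hqz : q.colours = {z}) (hyz : y ≠ z)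
    (hwin : ∀ c h', (∀ d, d = y ∨ d = z → d ≠ c → ∃ r : Piece n 4, r.colours = {d, c} ∧
      IsPosition h' (insert r (𝒜 \ {p, q})) ∧
      potential (insert r (𝒜 \ {p, q})) = potential 𝒜 + 1) →
      CanWin (fun _ => s + 1) (7 * s + 1) h') : CanWin (fun _ => s + 1) (7 * s + 1) h := by
  have hne : p ≠ q := by
    rintro rfl
    exact hyz (singleton_injective (hpy.symm.trans hqz))
  obtain ⟨v, hv⟩ := (hA.valid p hp).exists_star (by simp [hpy])
  obtain ⟨w, hw⟩ := (hA.valid q hq).exists_star (by simp [hqz])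
  have hdisj := hA.disjoint hp hq hne
  refine hA.canWin_of_query (by omega) (disjoint_iff_ne.1 hdisj v hv.centre_mem w hw.centre_mem)
    fun c h' hh hc hlen => hwin c h' ?_
  have cherry {S : Finset (Fin n)} {x : Fin n} {d : Fin 4} (hS : IsRainbowStar h' x S {c, d})
      (hdc : d ≠ c) (hsub : S ⊆ p.verts ∪ q.verts) : ∃ r : Piece n 4, r.colours = {d, c} ∧
      IsPosition h' (insert r (𝒜 \ {p, q})) ∧
      potential (insert r (𝒜 \ {p, q})) = potential 𝒜 + 1 := by
    have hcard : #{c, d} = 2 := card_pair hdc.symm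
    exact ⟨⟨S, {c, d}⟩, pair_comm c d, hA.merge hh hlen hp hq hne
      (Piece.isValid_of_star hS (insert_nonempty c _) hcard.le) hsub
      (by rw [hcard, hpy, hqz, card_singleton, card_singleton])⟩
  rintro d (rfl | rfl) hdc
  · refine cherry (x := v) (S := insert w p.verts) ?_ hdc
      (insert_subset (mem_union_right _ hw.centre_mem) subset_union_left)
    exact .extend (hpy ▸ hv.mono hh) (disjoint_right.1 hdisj hw.centre_mem)
      (notMem_singleton.2 hdc.symm) hc
  · refine cherry (x := w) (S := insert v q.verts) ?_ hdc
      (insert_subset (mem_union_left _ hv.centre_mem) subset_union_right)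
    exact .extend (hqz ▸ hw.mono hh) (disjoint_left.1 hdisj hv.centre_mem)
      (notMem_singleton.2 hdc.symm) (by rwa [Sym2.eq_swap])

theorem canWin_of_edge_of_base_colour (hI : WinsAbove n s (potential 𝒜)) (hA : IsPosition h 𝒜)
    (ha : IsBased a 𝒜) (hp : p ∈ 𝒜) (hq : q ∈ 𝒜) (hpa : p.colours = {a}) (hqz : q.colours = {z})
    (haz : a ≠ z) : CanWin (fun _ => s + 1) (7 * s + 1) h := by
  refine canWin_of_merge_edges hA hp hq hpa hqz haz fun c h' hmerge => ?_
  obtain ⟨d, hd, hdc, had⟩ : ∃ d, (d = a ∨ d = z) ∧ d ≠ c ∧ a ∈ ({d, c} : Finset (Fin 4)) := by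
    by_cases hca : c = a
    · exact ⟨z, .inr rfl, fun hzc => haz (hca.symm.trans hzc.symm), by simp [hca]⟩
    · exact ⟨a, .inl rfl, Ne.symm hca, mem_insert_self a _⟩
  obtain ⟨r, hr, hpos, hpot⟩ := hmerge d hd hdc
  exact hI h' _ a hpos ((ha.mono sdiff_subset).insert fun _ => hr ▸ had) (by omega)

theorem exists_cherry_of_not_isBased (hA : IsPosition h 𝒜) (ha : IsBased a 𝒜)
    (hb : ¬ IsBased b 𝒜) :
    a ≠ b ∧ ∃ k ∈ 𝒜, ∃ d, d ≠ a ∧ d ≠ b ∧ k.colours = {d, a} := by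
  simp only [IsBased, not_forall] at hb
  obtain ⟨k, hk, hcard, hbk⟩ := hb
  have hak := ha k hk hcard
  have htwo : #k.colours = 2 := ((hA.valid k hk).card_eq_two_or_eq_univ hcard).resolve_right
    fun huniv => hbk (huniv ▸ mem_univ b)
  obtain ⟨d, hda, hkd⟩ := exists_eq_pair_of_card_eq_two htwo hak
  refine ⟨ne_of_mem_of_not_mem hak hbk, k, hk, d, hda, ?_, hkd⟩
  rintro rfl
  exact hbk (hkd ▸ mem_insert_self d _)

theorem compl_pair_eq_of_distinct {a b c d : Fin 4} (hab : a ≠ b) (hac : a ≠ c) (had : a ≠ d)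
    (hbc : b ≠ c) (hbd : b ≠ d) (hcd : c ≠ d) : ({a, b}ᶜ : Finset (Fin 4)) = {c, d} := by
  decide +revert

theorem exists_cherry_compl_of_not_isBased {k : Piece n 4} {c : Fin 4} (hA : IsPosition h 𝒜)
    (ha : IsBased a 𝒜) (hc : ¬ IsBased c 𝒜) (hk : k ∈ 𝒜) (hyz : y ≠ z)
    (hkc : k.colours = {y, z}ᶜ) :
    ∃ k' ∈ 𝒜, ∃ d, (d = y ∨ d = z) ∧ d ≠ c ∧ k'.colours = {d, c}ᶜ := by
  by_cases hcy : c = y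
  · exact ⟨k, hk, z, .inr rfl, hcy ▸ hyz.symm, by rw [hkc, hcy, pair_comm]⟩
  by_cases hcz : c = z
  · exact ⟨k, hk, y, .inl rfl, hcz ▸ hyz, by rw [hkc, hcz]⟩
  obtain ⟨hac, k', hk', e, hea, hec, hk'c⟩ := exists_cherry_of_not_isBased hA ha hc
  have hcard : #k.colours = 2 := by rw [hkc, card_compl, card_pair hyz, Fintype.card_fin]
  obtain ⟨f, -, hkf⟩ := exists_eq_pair_of_card_eq_two hcard (ha k hk (by omega))
  have hmem (x : Fin 4) : ¬ (x = y ∨ x = z) ↔ x = f ∨ x = a := by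
    have hx : x ∈ ({y, z}ᶜ : Finset (Fin 4)) ↔ x ∈ ({f, a} : Finset (Fin 4)) := by rw [← hkc, hkf]
    simpa only [mem_compl, mem_insert, mem_singleton] using hx
  have hcf : c = f := ((hmem c).1 (by tauto)).resolve_right (Ne.symm hac)
  obtain ⟨hay, haz⟩ := not_or.1 ((hmem a).2 (.inr rfl))
  have heyz : e = y ∨ e = z := by
    by_contra heyz
    exact ((hmem e).1 heyz).elim (fun hef => hec (hef.trans hcf.symm)) hea
  rcases heyz with rfl | rfl
  · exact ⟨k', hk', z, .inr rfl, Ne.symm hcz, by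
      rw [hk'c, eq_comm, compl_pair_eq_of_distinct] <;> tauto⟩
  · exact ⟨k', hk', y, .inl rfl, Ne.symm hcy, by
      rw [hk'c, eq_comm, compl_pair_eq_of_distinct] <;> tauto⟩

-- After the two edges become a cherry, either the colour of the new edge is a base, or some cherry
-- of the old position has exactly the two colours missing from the new one.
theorem canWin_of_cherry_and_edges {k : Piece n 4} (hI : WinsAbove n s (potential 𝒜))
    (hA : IsPosition h 𝒜) (ha : IsBased a 𝒜) (hk : k ∈ 𝒜) (hp : p ∈ 𝒜) (hq : q ∈ 𝒜)
    (hpy : p.colours = {y}) (hqz : q.colours = {z}) (hyz : y ≠ z) (hkc : k.colours = {y, z}ᶜ) :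
    CanWin (fun _ => s + 1) (7 * s + 1) h := by
  refine canWin_of_merge_edges hA hp hq hpy hqz hyz fun c h' hmerge => ?_
  by_cases hc : IsBased c 𝒜
  · obtain ⟨d, hd, hdc⟩ : ∃ d, (d = y ∨ d = z) ∧ d ≠ c := by
      by_cases hyc : y = c
      · exact ⟨z, .inr rfl, fun hzc => hyz (hyc.trans hzc.symm)⟩
      · exact ⟨y, .inl rfl, hyc⟩
    obtain ⟨r, hr, hpos, hpot⟩ := hmerge d hd hdc
    exact hI h' _ c hpos ((hc.mono sdiff_subset).insert fun _ => by simp [hr]) (by omega)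
  · obtain ⟨k', hk', d, hd, hdc, hk'c⟩ := exists_cherry_compl_of_not_isBased hA ha hc hk hyz hkc
    obtain ⟨r, hr, hpos, hpot⟩ := hmerge d hd hdc
    have hk'card : #k'.colours = 2 := by rw [hk'c, card_compl, card_pair hdc, Fintype.card_fin]
    have hne {x : Fin 4} {p : Piece n 4} (hpx : p.colours = {x}) : k' ≠ p := by
      rintro rfl
      simp [hpx] at hk'card
    have hk'mem : k' ∈ 𝒜 \ {p, q} := by simp [hk', hne hpy, hne hqz]
    refine canWin_of_complementary_cherries (b := a) (hI.mono (by omega)) hpos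
      (mem_insert_self r _) (mem_insert_of_mem hk'mem) (by rw [hr, card_pair hdc])
      (by rw [hk'c, hr]) (ha.mono fun x hx => ?_)
    simp only [mem_sdiff, mem_insert, mem_singleton, not_or] at hx
    exact (hx.1.resolve_left hx.2.1).1

theorem exists_weights_of_edge_colours_subset_pair (hA : IsPosition h 𝒜) (ha : IsBased a 𝒜)
    (hab : a ≠ b)
    (hedge : ∀ p ∈ 𝒜, ∀ x, p.colours = {x} → x = a ∨ x = b) :
    ∃ w : Fin 4 → ℕ, ∑ i, w i = 5 ∧ ∀ p ∈ 𝒜, #p.verts ≤ ∑ i ∈ p.colours, w i := by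
  refine ⟨Pi.single a 3 + Pi.single b 2, ?_, fun p hp => ?_⟩
  · simp [sum_add_distrib]
  · have hv := hA.valid p hp
    simp only [Pi.add_apply, sum_add_distrib, sum_pi_single', hv.card_verts]
    rcases (Nat.succ_le_of_lt hv.card_pos).eq_or_lt with hone | hmany
    · obtain ⟨x, hx⟩ := card_eq_one.1 hone.symm
      rcases hedge p hp x hx with rfl | rfl
      · simp [hx, hab.symm]
      · simp [hx]
    · have hap := ha p hp hmany
      rcases hv.card_eq_two_or_eq_univ hmany with htwo | huniv
      · simp [hap, htwo]
      · simp [huniv]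

theorem exists_weights_of_two_edge_colours {c : Fin 4} (hA : IsPosition h 𝒜) (ha : IsBased a 𝒜)
    (hab : a ≠ b) (hac : a ≠ c) (hbc : b ≠ c)
    (hedge : ∀ p ∈ 𝒜, ∀ x, p.colours = {x} → x = b ∨ x = c)
    (hcherry : ∀ p ∈ 𝒜, p.colours ≠ {b, c}ᶜ) :
    ∃ w : Fin 4 → ℕ, ∑ i, w i = 5 ∧ ∀ p ∈ 𝒜, #p.verts ≤ ∑ i ∈ p.colours, w i := by
  refine ⟨Pi.single a 1 + Pi.single b 2 + Pi.single c 2, ?_, fun p hp => ?_⟩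
  · simp [sum_add_distrib]
  · have hv := hA.valid p hp
    simp only [Pi.add_apply, sum_add_distrib, sum_pi_single', hv.card_verts]
    rcases (Nat.succ_le_of_lt hv.card_pos).eq_or_lt with hone | hmany
    · obtain ⟨x, hx⟩ := card_eq_one.1 hone.symm
      rcases hedge p hp x hx with rfl | rfl
      · simp [hx, hab, hbc.symm]
      · simp [hx]
    · have hap := ha p hp hmany
      rcases hv.card_eq_two_or_eq_univ hmany with htwo | huniv
      · obtain ⟨d, hda, hpd⟩ := exists_eq_pair_of_card_eq_two htwo hap
        have hd : d = b ∨ d = c := by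
          by_contra! hne
          exact hcherry p hp (by
            rw [hpd, compl_pair_eq_of_distinct hbc hne.1.symm hab.symm hne.2.symm hac.symm hda])
        rcases hd with rfl | rfl <;> simp [hpd, hda]
      · simp [huniv]

theorem exists_weights (hA : IsPosition h 𝒜) (ha : IsBased a 𝒜)
    (hbase : ∀ b z, IsBased b 𝒜 → b ≠ z → {b} ∈ 𝒜.image Piece.colours →
      {z} ∉ 𝒜.image Piece.colours)
    (hcherry : ∀ y z, y ≠ z → {y} ∈ 𝒜.image Piece.colours → {z} ∈ 𝒜.image Piece.colours →
      {y, z}ᶜ ∉ 𝒜.image Piece.colours) :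
    ∃ w : Fin 4 → ℕ, ∑ i, w i = 5 ∧ ∀ p ∈ 𝒜, #p.verts ≤ ∑ i ∈ p.colours, w i := by
  by_cases hpair : ∃ b, a ≠ b ∧ ∀ p ∈ 𝒜, ∀ x, p.colours = {x} → x = a ∨ x = b
  · obtain ⟨b, hab, hedge⟩ := hpair
    exact exists_weights_of_edge_colours_subset_pair hA ha hab hedge
  push Not at hpair
  have hother (b : Fin 4) (hab : a ≠ b) :
      ∃ x, x ≠ a ∧ x ≠ b ∧ {x} ∈ 𝒜.image Piece.colours := by
    obtain ⟨p, hp, x, hx, hxa, hxb⟩ := hpair b hab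
    exact ⟨x, hxa, hxb, mem_image.2 ⟨p, hp, hx⟩⟩
  obtain ⟨e, hae⟩ := exists_ne a
  obtain ⟨b, hba, -, hb⟩ := hother e hae.symm
  obtain ⟨c, hca, hcb, hc⟩ := hother b hba.symm
  have hca_cherry : {c, a} ∈ 𝒜.image Piece.colours := by
    obtain ⟨-, k, hk, d, hda, hdb, hkd⟩ :=
      exists_cherry_of_not_isBased hA ha fun hbb => hbase b c hbb hcb.symm hb hc
    have hda_cherry : {d, a} ∈ 𝒜.image Piece.colours := mem_image.2 ⟨k, hk, hkd⟩
    by_cases hdc : d = c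
    · rwa [← hdc]
    · refine absurd ?_ (hcherry b c hcb.symm hb hc)
      rwa [compl_pair_eq_of_distinct hcb.symm hdb.symm hba (Ne.symm hdc) hca hda]
  refine exists_weights_of_two_edge_colours hA ha hba.symm hca.symm hcb.symm (fun p hp x hx => ?_)
    fun p hp hpc => hcherry b c hcb.symm hb hc (mem_image.2 ⟨p, hp, hpc⟩)
  have hx' : {x} ∈ 𝒜.image Piece.colours := mem_image.2 ⟨p, hp, hx⟩
  by_contra! hne
  by_cases hxa : x = a
  · exact hbase a b ha hba.symm (hxa ▸ hx') hb
  · refine hcherry b x hne.1.symm hb hx' ?_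
    rwa [compl_pair_eq_of_distinct hne.1.symm hcb.symm hba hne.2 hxa hca]

theorem canWin_of_fresh_edge (hI : WinsAbove n s (potential 𝒜)) (hA : IsPosition h 𝒜)
    (ha : IsBased a 𝒜) (hunused : 1 < #(𝒜.biUnion Piece.verts)ᶜ) :
    CanWin (fun _ => s + 1) (7 * s + 1) h := by
  obtain ⟨u, hu, v, hv, huv⟩ := one_lt_card.1 hunused
  simp only [mem_compl, mem_biUnion, not_exists, not_and] at hu hv
  refine hA.canWin_of_query (by omega) huv fun c h' hh hc hlen => ?_
  obtain ⟨hpos, hpot⟩ := hA.replace (r := ⟨{v, u}, {c}⟩) hh hlen Subset.rfl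
    (Piece.isValid_of_star (isRainbowStar_edge huv hc) (singleton_nonempty c) (by simp))
    (fun q hq => by simp [hu q hq, hv q hq]) (by simp [Piece.weight])
  exact hI h' _ a hpos (ha.insert fun hcard => by simp at hcard) (by omega)

theorem one_lt_card_compl_biUnion_verts {w : Fin 4 → ℕ} (hw : ∑ i, w i = 5)
    (hverts : ∀ p ∈ 𝒜, #p.verts ≤ ∑ i ∈ p.colours, w i)
    (hs : ∀ i, #{p ∈ 𝒜 | i ∈ p.colours} ≤ s) (hn : 5 * s + 2 ≤ n) :
    1 < #(𝒜.biUnion Piece.verts)ᶜ := by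
  have hused : #(𝒜.biUnion Piece.verts) ≤ s * 5 :=
    card_biUnion_le.trans (hw ▸ sum_le_of_colour_weights hverts hs)
  rw [card_compl, Fintype.card_fin]
  omega

theorem canWin_of_winsAbove (hn : 5 * s + 2 ≤ n) (hI : WinsAbove n s (potential 𝒜))
    (hA : IsPosition h 𝒜) (ha : IsBased a 𝒜) (hs : ∀ i, #{p ∈ 𝒜 | i ∈ p.colours} ≤ s) :
    CanWin (fun _ => s + 1) (7 * s + 1) h := by
  by_contra hlose
  have hbase (b z : Fin 4) (hb : IsBased b 𝒜) (hbz : b ≠ z)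
      (hpb : {b} ∈ 𝒜.image Piece.colours) : {z} ∉ 𝒜.image Piece.colours := by
    intro hqz
    obtain ⟨p, hp, hpb⟩ := mem_image.1 hpb
    obtain ⟨q, hq, hqz⟩ := mem_image.1 hqz
    exact hlose (canWin_of_edge_of_base_colour hI hA hb hp hq hpb hqz hbz)
  have hcherry (y z : Fin 4) (hyz : y ≠ z) (hpy : {y} ∈ 𝒜.image Piece.colours)
      (hqz : {z} ∈ 𝒜.image Piece.colours) : {y, z}ᶜ ∉ 𝒜.image Piece.colours := by
    intro hk
    obtain ⟨p, hp, hpy⟩ := mem_image.1 hpy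
    obtain ⟨q, hq, hqz⟩ := mem_image.1 hqz
    obtain ⟨k, hk, hkc⟩ := mem_image.1 hk
    exact hlose (canWin_of_cherry_and_edges hI hA ha hk hp hq hpy hqz hyz hkc)
  obtain ⟨w, hw, hverts⟩ := exists_weights hA ha hbase hcherry
  exact hlose (canWin_of_fresh_edge hI hA ha (one_lt_card_compl_biUnion_verts hw hverts hs hn))

theorem canWin_of_isBased (hn : 5 * s + 2 ≤ n) (hA : IsPosition h 𝒜) (ha : IsBased a 𝒜) :
    CanWin (fun _ => s + 1) (7 * s + 1) h := by
  induction hk : 7 * s + 1 - potential 𝒜 using Nat.strong_induction_on generalizing h 𝒜 a with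
  | _ k ih =>
    by_cases hs : ∀ i, #{p ∈ 𝒜 | i ∈ p.colours} ≤ s
    · have hpot := potential_le hs
      exact canWin_of_winsAbove hn (fun h' ℬ b hB hb hlt => ih _ (by omega) hB hb rfl) hA ha hs
    · push Not at hs
      obtain ⟨i, hi⟩ := hs
      exact hA.canWin_of_card hi

theorem seven_mul_add_one_le_choose_two (hn : 5 * s + 2 ≤ n) : 7 * s + 1 ≤ n.choose 2 := by
  refine le_trans ?_ (Nat.choose_le_choose 2 hn)
  rw [Nat.choose_two_right, Nat.le_div_iff_mul_le two_pos, Nat.add_sub_assoc (by norm_num)]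
  nlinarith [Nat.zero_le s]

end Strategy

end OnlineRamsey

theorem restrictedOnlineRamsey_four_colours_upper_general {r n : ℕ} (hr : 1 ≤ r)
    (hn : 5 * r - 3 ≤ n) : BuilderWinsIn n 4 (fun _ => r) (7 * r - 6) := by
  obtain ⟨s, rfl⟩ := Nat.exists_eq_add_of_le' hr
  have hvertices : 5 * s + 2 ≤ n := by omega
  have : NeZero n := ⟨by omega⟩
  exact (OnlineRamsey.canWin_of_isBased (a := 0) hvertices OnlineRamsey.isPosition_nil
    fun p hp => absurd hp (notMem_empty p)).builderWinsIn
      (OnlineRamsey.seven_mul_add_one_le_choose_two hvertices)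

/-- For `r ≥ 1`, `R̃₄(rK₂; 5r − 3) ≤ 7r − 5`. -/
theorem restrictedOnlineRamsey_four_colours_upper (r : ℕ) (hr : 1 ≤ r) :
    restrictedOnlineRamsey (5 * r - 3) 4 (fun _ => r) ≤ 7 * r - 5 :=
  (Nat.sInf_le (restrictedOnlineRamsey_four_colours_upper_general hr le_rfl)).trans (by omega)
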